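/- arXiv:2003.07265 — 2 statements merged into one kernel-verified Lean document; each statement's English description precedes it below -/
import Mathlib

section
/- Let Ω ⊂ ℝⁿ be a bounded domain, μ0 a nontrivial finite positive Radon measure on Ω, and w ∈ L¹(Ω) a weight with w > 0 almost everywhere. Assume that for every finite signed Radon measure μ on Ω with μ(Ω) = 0 and |μ| ≤ κ μ0 (κ > 0) there exists a measurable vector field u : Ω → ℝⁿ with ‖u/w‖_∞ ≤ C κ (C independent of κ and μ) such that ∫_Ω u·∇h dx = −∫_Ω h dμ for all h ∈ 𝓔. Then the Poincaré inequality (P1) holds for the weight w: there is C' > 0 with ∫_Ω |f − f_Ω| dμ0 ≤ C' ∫_Ω |∇f| w for all f ∈ 𝓔, where f_Ω := μ0(Ω)^{−1} ∫_Ω f dμ0. -/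
open MeasureTheory Metric Set
open scoped RealInnerProductSpace ENNReal NNReal

noncomputable section

/-- `ℝⁿ` as a Euclidean space. -/
abbrev En (n : ℕ) := EuclideanSpace ℝ (Fin n)

/-- The geodesic distance, within the set `U`, from the point `x` to the base point `x0`:
the infimum of the lengths (total variations) of rectifiable curves joining `x` to `x0`
inside `U` (non-rectifiable curves have infinite length, so they do not affect the
infimum). -/
def geoDist {X : Type*} [PseudoEMetricSpace X] (U : Set X) (x0 x : X) : ℝ≥0∞ :=
  ⨅ (γ : ℝ → X) (_ : ContinuousOn γ (Set.Icc 0 1)) (_ : Set.MapsTo γ (Set.Icc 0 1) U)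
    (_ : γ 0 = x) (_ : γ 1 = x0), eVariationOn γ (Set.Icc 0 1)

/-- The open measurable cover `Ω̂` associated with a measurable cover `Ω̃`:
`Ω̂ = {x ∈ Ω̃ : dist(x, ℝⁿ \ Ω̃) > 0}`. -/
def hatSet {n : ℕ} (Ot : Set (En n)) : Set (En n) :=
  {x ∈ Ot | 0 < Metric.infDist x Otᶜ}

/-- The integral `∫_s f dμ` of a function against a signed measure, defined through the
Jordan decomposition of `μ`. -/
def signedIntegral {n : ℕ} (μ : MeasureTheory.SignedMeasure (En n)) (s : Set (En n))
    (f : En n → ℝ) : ℝ :=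
  (∫ x in s, f x ∂μ.toJordanDecomposition.posPart) -
    ∫ x in s, f x ∂μ.toJordanDecomposition.negPart

/-- `v` is a weak gradient of `f` on the open set `U`. -/
def HasWeakGradOn {n : ℕ} (f : En n → ℝ) (v : En n → En n) (U : Set (En n)) : Prop :=
  ∀ φ : En n → ℝ, ContDiff ℝ (⊤ : ℕ∞) φ → HasCompactSupport φ → tsupport φ ⊆ U →
    ∫ x in U, f x • gradient φ x = - ∫ x in U, φ x • v x

/-- Membership in the space `𝓖`: `f` is locally integrable on `U`, has the weak gradient
`v` on `U`, and for every `δ > 0` there is `r > n` with `|∇f| ∈ L^r(U_δ)`. -/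
def MemG {n : ℕ} (U : Set (En n)) (f : En n → ℝ) (v : En n → En n) : Prop :=
  MeasureTheory.LocallyIntegrableOn f U volume ∧ HasWeakGradOn f v U ∧
    ∀ δ : ℝ, 0 < δ → ∃ r : ℝ, (n : ℝ) < r ∧
      MeasureTheory.MemLp v (ENNReal.ofReal r)
        (volume.restrict {x ∈ U | δ < Metric.infDist x Uᶜ})

/-- Membership in the space `𝓔` attached to the weight `w`: `f ∈ 𝓖` (with weak gradient
`v`), `f ∈ L¹(μ0)` and `|∇f| w ∈ L¹(Ω)`. -/
def MemE {n : ℕ} (Ω U : Set (En n)) (μ0 : MeasureTheory.Measure (En n)) (w : En n → ℝ)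
    (f : En n → ℝ) (v : En n → En n) : Prop :=
  MemG U f v ∧ MeasureTheory.Integrable f μ0 ∧
    MeasureTheory.IntegrableOn (fun x => ‖v x‖ * w x) Ω volume

theorem aux_density {n : ℕ} (Ω : Set (En n)) (hΩ : MeasurableSet Ω) (μ0 : Measure (En n))
    [IsFiniteMeasure μ0] (hs : μ0 Ωᶜ = 0) (φ : En n → ℝ) (hφ : Measurable φ)
    (hb : ∀ x, |φ x| ≤ 2) (h0 : ∫ x, φ x ∂μ0 = 0) :
    ∃ μ : MeasureTheory.SignedMeasure (En n), μ Ω = 0 ∧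
      μ.totalVariation ≤ ENNReal.ofReal 2 • μ0 ∧
      ∀ f : En n → ℝ, Integrable f μ0 → signedIntegral μ Ω f = ∫ x, f x * φ x ∂μ0 := by
  have hint : Integrable φ μ0 :=
    Integrable.of_bound hφ.aestronglyMeasurable 2 (Filter.Eventually.of_forall hb)
  have hfin1 : IsFiniteMeasure (μ0.withDensity fun x => ENNReal.ofReal (φ x)) :=
    isFiniteMeasure_withDensity_ofReal hint.2
  have hfin2 : IsFiniteMeasure (μ0.withDensity fun x => ENNReal.ofReal (-φ x)) :=
    isFiniteMeasure_withDensity_ofReal hint.neg.2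
  let J : JordanDecomposition (En n) :=
    { posPart := μ0.withDensity fun x => ENNReal.ofReal (φ x)
      negPart := μ0.withDensity fun x => ENNReal.ofReal (-φ x)
      mutuallySingular := withDensity_ofReal_mutuallySingular hφ }
  have hJ : J.toSignedMeasure.toJordanDecomposition = J :=
    J.toJordanDecomposition_toSignedMeasure
  have key : ∀ f : En n → ℝ, Integrable f μ0 →
      signedIntegral J.toSignedMeasure Ω f = ∫ x, f x * φ x ∂μ0 := by
    intro f hf
    have hr1 : J.posPart.restrict Ω = J.posPart :=
      Measure.restrict_eq_self_of_ae_mem (withDensity_absolutelyContinuous μ0 _ hs)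
    have hr2 : J.negPart.restrict Ω = J.negPart :=
      Measure.restrict_eq_self_of_ae_mem (withDensity_absolutelyContinuous μ0 _ hs)
    unfold signedIntegral
    rw [hJ, hr1, hr2]
    change ∫ x, f x ∂(μ0.withDensity fun x => ENNReal.ofReal (φ x)) -
      ∫ x, f x ∂(μ0.withDensity fun x => ENNReal.ofReal (-φ x)) = _
    rw [integral_withDensity_eq_integral_toReal_smul (by fun_prop) (by simp),
      integral_withDensity_eq_integral_toReal_smul (by fun_prop) (by simp), ← integral_sub]
    · congr 1
      ext x
      simp only [ENNReal.toReal_ofReal', smul_eq_mul]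
      rcases le_total 0 (φ x) with h | h
      · rw [max_eq_left h, max_eq_right (by linarith)]; ring
      · rw [max_eq_right h, max_eq_left (by linarith)]; ring
    · refine hf.bdd_mul (c := 2) (by first | exact hφ.ennreal_ofReal.ennreal_toReal.aestronglyMeasurable | exact hφ.neg.ennreal_ofReal.ennreal_toReal.aestronglyMeasurable) (Filter.Eventually.of_forall fun x => ?_)
      have := hb x
      rw [abs_le] at this
      simp only [ENNReal.toReal_ofReal', Real.norm_eq_abs]
      rw [abs_of_nonneg (le_max_right _ _)]
      exact max_le (by linarith) (by norm_num)
    · refine hf.bdd_mul (c := 2) (by first | exact hφ.ennreal_ofReal.ennreal_toReal.aestronglyMeasurable | exact hφ.neg.ennreal_ofReal.ennreal_toReal.aestronglyMeasurable) (Filter.Eventually.of_forall fun x => ?_)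
      have := hb x
      rw [abs_le] at this
      simp only [ENNReal.toReal_ofReal', Real.norm_eq_abs]
      rw [abs_of_nonneg (le_max_right _ _)]
      exact max_le (by linarith) (by norm_num)
  refine ⟨J.toSignedMeasure, ?_, ?_, key⟩
  · have h1 := key (fun _ => 1) (integrable_const _)
    simp only [one_mul, h0, signedIntegral, hJ] at h1
    simp only [integral_const, smul_eq_mul, mul_one, measureReal_restrict_apply_univ] at h1
    rw [JordanDecomposition.toSignedMeasure, _root_.sub_apply,
      Measure.toSignedMeasure_apply_measurable hΩ, Measure.toSignedMeasure_apply_measurable hΩ]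
    exact h1
  · rw [SignedMeasure.totalVariation, hJ]
    change (μ0.withDensity fun x => ENNReal.ofReal (φ x)) +
      (μ0.withDensity fun x => ENNReal.ofReal (-φ x)) ≤ _
    rw [← withDensity_add_left (by fun_prop), ← withDensity_const]
    refine withDensity_mono (Filter.Eventually.of_forall fun x => ?_)
    have := hb x
    simp only [Pi.add_apply]
    rcases le_total 0 (φ x) with h | h
    · rw [ENNReal.ofReal_of_nonpos (by linarith : -φ x ≤ 0), add_zero]
      exact ENNReal.ofReal_le_ofReal ((le_abs_self _).trans this)
    · rw [ENNReal.ofReal_of_nonpos h, zero_add]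
      exact ENNReal.ofReal_le_ofReal ((neg_le_abs _).trans this)

/-- If, for the weight `w ∈ L¹(Ω)`, `w > 0` a.e., every finite signed
Radon measure `μ` on `Ω` with `μ(Ω) = 0` and `|μ| ≤ κ μ0` admits a solution `u` of
`div u = μ` with `‖u/w‖_∞ ≤ C κ` tested against all `h ∈ 𝓔`, then the Poincaré
inequality `(P1)` holds for `w`: `∫_Ω |f − f_Ω| dμ0 ≤ C' ∫_Ω |∇f| w` for all `f ∈ 𝓔`. -/
theorem stmt_2 (n : ℕ) (hn : 1 ≤ n) (Ω Ot : Set (En n))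
    (hΩopen : IsOpen Ω) (hΩconn : IsConnected Ω) (hΩbdd : Bornology.IsBounded Ω)
    (hcov : Ω ⊆ Ot) (hcovnull : volume (Ot \ Ω) = 0)
    (μ0 : Measure (En n)) [IsFiniteMeasure μ0] (hμ0ne : μ0 ≠ 0) (hμ0supp : μ0 Ωᶜ = 0)
    (w : En n → ℝ) (hwint : IntegrableOn w Ω volume)
    (hwpos : ∀ᵐ x ∂volume.restrict Ω, 0 < w x)
    (C : ℝ) (hC : 0 < C)
    (hsolv : ∀ κ : ℝ, 0 < κ →
      ∀ μ : MeasureTheory.SignedMeasure (En n),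
        μ Ω = 0 → μ.totalVariation ≤ ENNReal.ofReal κ • μ0 →
        ∃ u : En n → En n, Measurable u ∧
          (∀ᵐ x ∂volume.restrict Ω, ‖u x‖ ≤ C * κ * w x) ∧
          ∀ (h : En n → ℝ) (v : En n → En n), MemE Ω (hatSet Ot) μ0 w h v →
            ∫ x in Ω, ⟪u x, v x⟫ = - signedIntegral μ Ω h) :
    ∃ C' : ℝ, 0 < C' ∧
      ∀ (f : En n → ℝ) (v : En n → En n), MemE Ω (hatSet Ot) μ0 w f v →
        ∫ x in Ω, |f x - (∫ y in Ω, f y ∂μ0) / (μ0 Ω).toReal| ∂μ0 ≤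
          C' * ∫ x in Ω, ‖v x‖ * w x := by
  have hres : μ0.restrict Ω = μ0 := Measure.restrict_eq_self_of_ae_mem hμ0supp
  refine ⟨C * 2, by positivity, fun f v hfv => ?_⟩
  have hf : Integrable f μ0 := hfv.2.1
  rw [hres]
  have hΩu : (μ0 Ω).toReal = μ0.real univ := by
    rw [← hres, Measure.real, Measure.restrict_apply_univ, Measure.restrict_apply_self]
  have hM : 0 < μ0.real univ := by
    rw [Measure.real]
    exact ENNReal.toReal_pos (by simpa using hμ0ne) (measure_ne_top _ _)
  rw [hΩu]
  set M := μ0.real univ with hMdef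
  set a : ℝ := (∫ y, f y ∂μ0) / M with ha
  obtain ⟨f', hf'm, hf'⟩ := hf.aestronglyMeasurable
  let g : En n → ℝ := fun x => if a ≤ f' x then 1 else -1
  have hgm : Measurable g :=
    Measurable.ite (measurableSet_le measurable_const hf'm.measurable)
      measurable_const measurable_const
  have hg1 : ∀ x, |g x| ≤ 1 := by
    intro x
    simp only [g]
    split_ifs <;> simp
  have hgi : Integrable g μ0 :=
    Integrable.of_bound hgm.aestronglyMeasurable 1 (Filter.Eventually.of_forall hg1)
  set m : ℝ := (∫ x, g x ∂μ0) / M with hm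
  have hm1 : |m| ≤ 1 := by
    have := norm_integral_le_of_norm_le_const (μ := μ0) (f := g) (C := 1)
      (Filter.Eventually.of_forall hg1)
    rw [hm, abs_div, abs_of_pos hM, div_le_one hM]
    simpa using this
  have h0 : ∫ x, (g x - m) ∂μ0 = 0 := by
    rw [integral_sub hgi (integrable_const _), integral_const, smul_eq_mul, hm]
    field_simp
    ring
  obtain ⟨μ, hμ1, hμ2, hμ3⟩ := aux_density Ω hΩopen.measurableSet μ0 hμ0supp
    (fun x => g x - m) (hgm.sub_const m)
    (fun x => (abs_sub _ _).trans (by linarith [hg1 x])) h0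
  obtain ⟨u, -, hu, hsol⟩ := hsolv 2 two_pos μ hμ1 hμ2
  have e1 := hsol f v hfv
  rw [hμ3 f hf] at e1
  have hfg : Integrable (fun x => f x * g x) μ0 :=
    hf.mul_bdd hgm.aestronglyMeasurable (Filter.Eventually.of_forall hg1)
  have e2 : ∫ x, |f x - a| ∂μ0 = ∫ x, f x * (g x - m) ∂μ0 := by
    have : ∫ x, |f x - a| ∂μ0 = ∫ x, (f x * g x - a * g x) ∂μ0 := by
      refine integral_congr_ae ?_
      filter_upwards [hf'] with x hx
      simp only [g, ← hx]
      split_ifs with h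
      · rw [abs_of_nonneg (by linarith)]; ring
      · rw [abs_of_neg (by linarith)]; ring
    rw [this, integral_sub hfg (hgi.const_mul a), integral_const_mul]
    simp only [mul_sub]
    rw [integral_sub hfg (hf.mul_const m), integral_mul_const, ha, hm]
    ring
  have e3 : |∫ x in Ω, ⟪u x, v x⟫| ≤ ∫ x in Ω, (C * 2) * (‖v x‖ * w x) := by
    rw [← Real.norm_eq_abs]
    refine norm_integral_le_of_norm_le (hfv.2.2.const_mul _) ?_
    filter_upwards [hu] with x hx
    calc ‖⟪u x, v x⟫‖ ≤ ‖u x‖ * ‖v x‖ := norm_inner_le_norm _ _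
      _ ≤ (C * 2 * w x) * ‖v x‖ := by gcongr
      _ = _ := by ring
  rw [integral_const_mul, e1, abs_neg] at e3
  rw [e2]
  exact (le_abs_self _).trans e3
end
end

section
/- Let Ω ⊂ ℝⁿ be a bounded domain, μ0 a nontrivial finite positive Radon measure on Ω, and w ∈ L¹(Ω) a positive weight. Then the Poincaré inequality (P1) holds for w if and only if the inequality (P1*) holds for w. -/
open MeasureTheory Metric Set
open scoped RealInnerProductSpace ENNReal NNReal

noncomputable section

/-- The Poincaré inequality `(P1)` for the weight `w`: there is `C > 0` such that
`∫_Ω |f − f_Ω| dμ0 ≤ C ∫_Ω |∇f| w` for all `f ∈ 𝓔`. -/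
def P1 {n : ℕ} (Ω U : Set (En n)) (μ0 : MeasureTheory.Measure (En n))
    (w : En n → ℝ) : Prop :=
  ∃ C : ℝ, 0 < C ∧
    ∀ (f : En n → ℝ) (v : En n → En n), MemE Ω U μ0 w f v →
      ∫ x in Ω, |f x - (∫ y in Ω, f y ∂μ0) / (μ0 Ω).toReal| ∂μ0 ≤
        C * ∫ x in Ω, ‖v x‖ * w x

/-- The inequality `(P1*)` for the weight `w`: there is `C > 0` such that
`∫_Ω |f| dμ0 ≤ C (1 + μ0(Ω)/μ0(E)) ∫_Ω |∇f| w` for all `f ∈ 𝓖` whose zero set `E`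
has `μ0(E) > 0` (stated with lower integrals, so that finiteness of the right-hand
side entails `f ∈ L¹(μ0)`). -/
def P1star {n : ℕ} (Ω U : Set (En n)) (μ0 : MeasureTheory.Measure (En n))
    (w : En n → ℝ) : Prop :=
  ∃ C : ℝ, 0 < C ∧
    ∀ (f : En n → ℝ) (v : En n → En n), MemG U f v →
      0 < μ0 {x ∈ Ω | f x = 0} →
      ∫⁻ x in Ω, ENNReal.ofReal |f x| ∂μ0 ≤
        ENNReal.ofReal C * (1 + μ0 Ω / μ0 {x ∈ Ω | f x = 0}) *
          ∫⁻ x in Ω, ENNReal.ofReal (‖v x‖ * w x)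

open Filter Topology Convolution in
lemma mollify_L1 {n : ℕ} {F : Type*} [NormedAddCommGroup F] [NormedSpace ℝ F] [CompleteSpace F]
    (g : En n → F) (hg : Integrable g volume) (ρ : ℕ → ContDiffBump (0 : En n))
    (h0 : Tendsto (fun k => (ρ k).rOut) atTop (𝓝 0)) (hK : ∀ k, (ρ k).rOut ≤ 2 * (ρ k).rIn) :
    (∀ k, Integrable ((ρ k).normed volume ⋆[ContinuousLinearMap.lsmul ℝ ℝ, volume] g) volume) ∧
    Tendsto (fun k => ∫ x, ‖((ρ k).normed volume ⋆[ContinuousLinearMap.lsmul ℝ ℝ, volume] g) x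
      - g x‖) atTop (𝓝 0) := by
  have hρi : ∀ k, Integrable ((ρ k).normed volume) (volume : Measure (En n)) :=
    fun k => (ρ k).integrable_normed
  have hI : ∀ k, Integrable ((ρ k).normed volume ⋆[ContinuousLinearMap.lsmul ℝ ℝ, volume] g)
      volume := fun k => (hρi k).integrable_convolution _ hg
  refine ⟨hI, ?_⟩
  set G := fun k => (ρ k).normed volume ⋆[ContinuousLinearMap.lsmul ℝ ℝ, volume] g with hG
  set H := fun k => (ρ k).normed volume ⋆[ContinuousLinearMap.lsmul ℝ ℝ, volume]
    (fun x => ‖g x‖) with hH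
  have hHI : ∀ k, Integrable (H k) volume := fun k => (hρi k).integrable_convolution _ hg.norm
  have hHint : ∀ k, ∫ x, H k x = ∫ x, ‖g x‖ := by
    intro k
    have := integral_convolution (ContinuousLinearMap.lsmul ℝ ℝ) (hρi k) hg.norm
      (μ := (volume : Measure (En n))) (ν := (volume : Measure (En n)))
    simp only [hH]
    rw [this, (ρ k).integral_normed]
    simp
  have hGH : ∀ k x, ‖G k x‖ ≤ H k x := by
    intro k x
    simp only [hG, hH, convolution]
    refine (norm_integral_le_integral_norm _).trans (le_of_eq ?_)
    congr 1
    ext t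
    simp [norm_smul, abs_of_nonneg ((ρ k).nonneg_normed t)]
  have hGae := ContDiffBump.ae_convolution_tendsto_right_of_locallyIntegrable h0
    (Eventually.of_forall hK) hg.locallyIntegrable
  have hHae := ContDiffBump.ae_convolution_tendsto_right_of_locallyIntegrable h0
    (Eventually.of_forall hK) hg.norm.locallyIntegrable
  have t1 : Tendsto (fun k => ∫ x, min ‖G k x - g x‖ (2 * ‖g x‖)) atTop (𝓝 (∫ x : En n, (0 : ℝ))) := by
    refine tendsto_integral_of_dominated_convergence (fun x => 2 * ‖g x‖) ?_ (hg.norm.const_mul 2) ?_ ?_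
    · intro k
      exact (((hI k).sub hg).norm.inf (hg.norm.const_mul 2)).aestronglyMeasurable
    · intro k
      refine Eventually.of_forall fun x => ?_
      rw [Real.norm_of_nonneg (by positivity)]
      exact min_le_right _ _
    · filter_upwards [hGae] with x hx
      have h1 : Tendsto (fun k => ‖G k x - g x‖) atTop (𝓝 0) := by
        have := (hx.sub_const (g x)).norm
        simpa using this
      have := h1.min (tendsto_const_nhds (x := 2 * ‖g x‖))
      rwa [min_eq_left (by positivity)] at this
  have t2 : Tendsto (fun k => ∫ x, max (‖g x‖ - H k x) 0) atTop (𝓝 (∫ x : En n, (0 : ℝ))) := by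
    refine tendsto_integral_of_dominated_convergence (fun x => ‖g x‖) ?_ hg.norm ?_ ?_
    · intro k
      exact ((hg.norm.sub (hHI k)).sup (integrable_zero _ _ _)).aestronglyMeasurable
    · intro k
      refine Eventually.of_forall fun x => ?_
      rw [Real.norm_of_nonneg (by positivity)]
      have := (norm_nonneg _).trans (hGH k x)
      exact max_le (by linarith) (norm_nonneg _)
    · filter_upwards [hHae] with x hx
      have h1 : Tendsto (fun k => ‖g x‖ - H k x) atTop (𝓝 0) := by
        have := hx.const_sub (‖g x‖)
        simpa using this
      have := h1.max (tendsto_const_nhds (x := (0:ℝ)))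
      rwa [max_self] at this
  have t3 := t1.add t2
  simp only [integral_zero, add_zero] at t3
  refine squeeze_zero (fun k => integral_nonneg fun x => norm_nonneg _) (fun k => ?_) t3
  have i1 : Integrable (fun x => min ‖G k x - g x‖ (2 * ‖g x‖)) volume :=
    ((hI k).sub hg).norm.inf (hg.norm.const_mul 2)
  have i2 : Integrable (fun x => max (‖g x‖ - H k x) 0) volume :=
    (hg.norm.sub (hHI k)).sup (integrable_zero _ _ _)
  have i3 : Integrable (fun x => H k x - ‖g x‖) volume := (hHI k).sub hg.norm
  have e3 : ∫ x, (H k x - ‖g x‖) = 0 := by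
    rw [integral_sub (hHI k) hg.norm, hHint]; simp
  have : ∫ x, ‖G k x - g x‖ ≤ ∫ x, ((min ‖G k x - g x‖ (2 * ‖g x‖) + max (‖g x‖ - H k x) 0)
      + (H k x - ‖g x‖)) := by
    refine integral_mono ((hI k).sub hg).norm ((i1.add i2).add i3) fun x => ?_
    have h1 := norm_sub_le (G k x) (g x)
    have h2 := hGH k x
    rcases min_cases ‖G k x - g x‖ (2 * ‖g x‖) with h | h <;>
    rcases max_cases (‖g x‖ - H k x) 0 with h' | h' <;> linarith
  have i12 : Integrable (fun x => min ‖G k x - g x‖ (2 * ‖g x‖) + max (‖g x‖ - H k x) 0) volume :=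
    i1.add i2
  rw [integral_add i12 i3, integral_add i1 i2, e3, add_zero] at this
  exact this
open Filter Topology Convolution in
lemma grad_mollify {n : ℕ} (f : En n → ℝ) (v : En n → En n) (U K : Set (En n))
    (hw : HasWeakGradOn f v U) (hKm : MeasurableSet K) (hU : MeasurableSet U) (hKU : K ⊆ U)
    (hf : IntegrableOn f K volume) (hv : IntegrableOn v K volume)
    (ρ : ContDiffBump (0 : En n)) (x : En n) (hx : closedBall x ρ.rOut ⊆ K) :
    HasGradientAt (ρ.normed volume ⋆[ContinuousLinearMap.lsmul ℝ ℝ, volume] (K.indicator f))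
      ((ρ.normed volume ⋆[ContinuousLinearMap.lsmul ℝ ℝ, volume] (K.indicator v)) x) x := by
  have hfi : Integrable (K.indicator f) volume := hf.integrable_indicator hKm
  have hvi : Integrable (K.indicator v) volume := hv.integrable_indicator hKm
  have hρc : ContDiff ℝ 1 (ρ.normed (volume : Measure (En n))) := ρ.contDiff_normed
  have hρs := ρ.hasCompactSupport_normed (μ := (volume : Measure (En n)))
  have hD := hρs.hasFDerivAt_convolution_left (ContinuousLinearMap.lsmul ℝ ℝ) hρc
    hfi.locallyIntegrable x
  rw [hasGradientAt_iff_hasFDerivAt]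
  refine hD.congr_fderiv (Eq.symm ?_)
  -- the test function
  set φ : En n → ℝ := fun y => ρ.normed volume (x - y) with hφ
  have hφc : ContDiff ℝ (⊤ : ℕ∞) φ := ρ.contDiff_normed.comp (contDiff_const.sub contDiff_id)
  have hsuppφ : ∀ y, φ y ≠ 0 → y ∈ closedBall x ρ.rOut := by
    intro y hy
    have : x - y ∈ Function.support (ρ.normed (volume : Measure (En n))) := hy
    rw [ρ.support_normed_eq] at this
    rw [mem_ball_zero_iff] at this
    rw [mem_closedBall, dist_comm, dist_eq_norm]
    exact this.le
  have htφ : tsupport φ ⊆ closedBall x ρ.rOut :=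
    closure_minimal hsuppφ isClosed_closedBall
  have hφs : HasCompactSupport φ :=
    (isCompact_closedBall x ρ.rOut).of_isClosed_subset (isClosed_tsupport _) htφ
  have hgr : ∀ y, gradient φ y = - gradient (ρ.normed volume) (x - y) := by
    intro y
    have h1 : HasFDerivAt (ρ.normed (volume : Measure (En n)))
        (fderiv ℝ (ρ.normed volume) (x - y)) (x - y) :=
      (hρc.differentiable one_ne_zero).differentiableAt.hasFDerivAt
    have h2 : HasFDerivAt φ (-(fderiv ℝ (ρ.normed volume) (x - y))) y := by
      have := h1.comp y ((hasFDerivAt_id y).const_sub x)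
      refine this.congr_fderiv ?_
      ext; simp
    rw [gradient, gradient, h2.fderiv, map_neg]
  have hgs : ∀ y, y ∉ K → gradient φ y = 0 := by
    intro y hy
    have : y ∉ tsupport φ := fun h => hy (hx (htφ h))
    have h3 : φ =ᶠ[𝓝 y] 0 := notMem_tsupport_iff_eventuallyEq.1 this
    rw [gradient, h3.fderiv_eq]; simp
  have key := hw φ hφc hφs (htφ.trans (hx.trans hKU))
  have k1 : ∫ y in U, f y • gradient φ y = ∫ y, K.indicator f y • gradient φ y := by
    rw [← integral_indicator hU]
    congr 1; ext1 y
    by_cases hy : y ∈ K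
    · rw [indicator_of_mem hy, indicator_of_mem (hKU hy)]
    · rw [indicator_of_notMem hy, indicator, hgs y hy]; simp
  have k2 : ∫ y in U, φ y • v y = ∫ y, φ y • K.indicator v y := by
    rw [← integral_indicator hU]
    congr 1; ext1 y
    by_cases hy : y ∈ K
    · rw [indicator_of_mem hy, indicator_of_mem (hKU hy)]
    · have : φ y = 0 := by
        by_contra h
        exact hy (hx (hsuppφ y h))
      rw [indicator_of_notMem hy, indicator, this]; simp
  rw [k1, k2] at key
  have k3 : (ρ.normed volume ⋆[ContinuousLinearMap.lsmul ℝ ℝ, volume] (K.indicator v)) x =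
      ∫ y, φ y • K.indicator v y := by
    rw [convolution_eq_swap]; rfl
  have hgc : Continuous (gradient φ) := by
    unfold gradient
    exact (InnerProductSpace.toDual ℝ (En n)).symm.continuous.comp
      (hφc.continuous_fderiv (by simp))
  have hgcs : HasCompactSupport (gradient φ) := by
    refine (isCompact_closedBall x ρ.rOut).of_isClosed_subset (isClosed_tsupport _) ?_
    refine closure_minimal (fun y hy => ?_) isClosed_closedBall
    by_contra h
    have : y ∉ tsupport φ := fun h' => h (htφ h')
    have h3 : φ =ᶠ[𝓝 y] 0 := notMem_tsupport_iff_eventuallyEq.1 this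
    apply hy
    rw [gradient, h3.fderiv_eq]; simp
  have h_integr : Integrable (fun y => K.indicator f y • gradient φ y) volume :=
    hfi.locallyIntegrable.integrable_smul_right_of_hasCompactSupport hgc hgcs
  rw [k3]
  have k4 : ∫ y, φ y • K.indicator v y = - ∫ y, K.indicator f y • gradient φ y := by
    rw [key, neg_neg]
  rw [k4]
  ext h
  rw [InnerProductSpace.toDual_apply_apply, inner_neg_left, real_inner_comm, ← integral_inner h_integr]
  rw [convolution_eq_swap, ContinuousLinearMap.integral_apply]
  · rw [← integral_neg]
    congr 1; ext1 y
    rw [hgr, inner_smul_right, inner_neg_right, real_inner_comm, gradient,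
      InnerProductSpace.toDual_symm_apply]
    simp [ContinuousLinearMap.precompL_apply, mul_comm]
  · have : ConvolutionExists (fderiv ℝ (ρ.normed volume)) (K.indicator f)
        ((ContinuousLinearMap.lsmul ℝ ℝ).precompL (En n)) (volume : Measure (En n)) :=
      HasCompactSupport.convolutionExists_left _ (hρs.fderiv ℝ) (hρc.continuous_fderiv one_ne_zero)
        hfi.locallyIntegrable
    exact (this x).integrable_swap
lemma lip_bound {ψ ψ' : ℝ → ℝ} (hψ : ∀ t, HasDerivAt ψ (ψ' t) t) (hb : ∀ t, |ψ' t| ≤ 1) (a b : ℝ) :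
    |ψ a - ψ b| ≤ |a - b| := by
  have := Convex.norm_image_sub_le_of_norm_hasDerivWithin_le (f := ψ) (f' := ψ') (C := 1)
    (s := Set.univ) (x := b) (y := a) (fun t _ => (hψ t).hasDerivWithinAt) (fun t _ => hb t)
    convex_univ (mem_univ _) (mem_univ _)
  simpa using this

open Filter Topology in
lemma gradient_zero_of_notMem {n : ℕ} (φ : En n → ℝ) (y : En n) (h : y ∉ tsupport φ) :
    gradient φ y = 0 := by
  have h3 : φ =ᶠ[𝓝 y] 0 := notMem_tsupport_iff_eventuallyEq.1 h
  rw [gradient, h3.fderiv_eq]; simp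

lemma gradient_cont {n : ℕ} (φ : En n → ℝ) (hφc : ContDiff ℝ (⊤ : ℕ∞) φ) :
    Continuous (gradient φ) := by
  unfold gradient
  exact (InnerProductSpace.toDual ℝ (En n)).symm.continuous.comp
      (hφc.continuous_fderiv (by simp))

lemma gradient_hcs {n : ℕ} (φ : En n → ℝ) (hφ : HasCompactSupport φ) :
    HasCompactSupport (gradient φ) := by
  refine hφ.of_isClosed_subset (isClosed_tsupport _) ?_
  refine closure_minimal (fun y hy => ?_) (isClosed_tsupport _)
  by_contra h
  exact hy (gradient_zero_of_notMem φ y h)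

lemma ibp_smooth {n : ℕ} (h : En n → ℝ) (g : En n → En n) (hc : Continuous h) (gc : Continuous g)
    (φ : En n → ℝ) (hφc : ContDiff ℝ (⊤ : ℕ∞) φ) (hφs : HasCompactSupport φ)
    (hg : ∀ x ∈ tsupport φ, HasGradientAt h (g x) x) :
    ∫ x, h x • gradient φ x = - ∫ x, φ x • g x := by
  have i1 : Integrable (fun x => h x • gradient φ x) volume :=
    (hc.smul (gradient_cont φ hφc)).integrable_of_hasCompactSupport (gradient_hcs φ hφs).smul_left
  have i2 : Integrable (fun x => φ x • g x) volume :=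
    (hφc.continuous.smul gc).integrable_of_hasCompactSupport hφs.smul_right
  refine ext_inner_left ℝ fun e => ?_
  rw [inner_neg_right, ← integral_inner i1, ← integral_inner i2]
  have := integral_bilinear_hasFDerivAt_right_eq_neg_left_of_integrable (μ := (volume : Measure (En n)))
    (f := h) (f' := fun x => InnerProductSpace.toDual ℝ (En n) (g x)) (g := φ)
    (g' := fun x => fderiv ℝ φ x) (v := e) (B := ContinuousLinearMap.mul ℝ ℝ) ?_ ?_ ?_ ?_ ?_
  · have l : ∀ x, inner ℝ e (h x • gradient φ x) = ContinuousLinearMap.mul ℝ ℝ (h x) (fderiv ℝ φ x e) := by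
      intro x
      rw [inner_smul_right, real_inner_comm, gradient, InnerProductSpace.toDual_symm_apply]
      simp
    have r : ∀ x, inner ℝ e (φ x • g x) = ContinuousLinearMap.mul ℝ ℝ
        (InnerProductSpace.toDual ℝ (En n) (g x) e) (φ x) := by
      intro x
      rw [inner_smul_right, real_inner_comm]
      simp [mul_comm]
    simp_rw [l, r]
    exact this
  · refine (i2.const_inner (𝕜 := ℝ) e).congr (Filter.Eventually.of_forall fun x => ?_)
    simp only [inner_smul_right, ContinuousLinearMap.mul_apply', InnerProductSpace.toDual_apply_apply]
    rw [real_inner_comm, mul_comm]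
  · refine (i1.const_inner (𝕜 := ℝ) e).congr (Filter.Eventually.of_forall fun x => ?_)
    simp only [inner_smul_right, ContinuousLinearMap.mul_apply']
    rw [real_inner_comm, gradient, InnerProductSpace.toDual_symm_apply]
  · exact (hc.mul hφc.continuous).integrable_of_hasCompactSupport hφs.mul_left
  · intro x hx
    exact (hg x hx).hasFDerivAt
  · intro x _
    exact (hφc.differentiable (by simp)).differentiableAt.hasFDerivAt

open Filter Topology Convolution in
lemma weak_chain {n : ℕ} (f : En n → ℝ) (v : En n → En n) (U : Set (En n)) (hU : IsOpen U)
    (hf : ∀ K ⊆ U, IsCompact K → IntegrableOn f K volume)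
    (hv : ∀ K ⊆ U, IsCompact K → IntegrableOn v K volume)
    (hw : HasWeakGradOn f v U) (ψ ψ' : ℝ → ℝ) (hψ : ∀ t, HasDerivAt ψ (ψ' t) t)
    (hψ' : Continuous ψ') (hb : ∀ t, |ψ' t| ≤ 1) :
    HasWeakGradOn (fun x => ψ (f x)) (fun x => ψ' (f x) • v x) U := by
  intro φ hφc hφs hφU
  obtain ⟨δ, hδ, hδU⟩ := IsCompact.exists_cthickening_subset_open hφs hU hφU
  set K := cthickening δ (tsupport φ) with hKdef
  have hKc : IsCompact K := hφs.isCompact.cthickening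
  have hKm : MeasurableSet K := hKc.measurableSet
  have hsK : tsupport φ ⊆ K := self_subset_cthickening _
  have hfK := hf K hδU hKc
  have hvK := hv K hδU hKc
  have hfi : Integrable (K.indicator f) volume := hfK.integrable_indicator hKm
  have hvi : Integrable (K.indicator v) volume := hvK.integrable_indicator hKm
  set ρ : ℕ → ContDiffBump (0 : En n) := fun k =>
    ⟨δ / (k + 1) / 2, δ / (k + 1), by positivity, half_lt_self (by positivity)⟩ with hρ
  have hr0 : Tendsto (fun k => (ρ k).rOut) atTop (𝓝 0) := by
    have := (tendsto_one_div_add_atTop_nhds_zero_nat (𝕜 := ℝ)).const_mul δ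
    simpa [hρ, div_eq_mul_inv] using this
  have hrK : ∀ k, (ρ k).rOut ≤ 2 * (ρ k).rIn := by
    intro k; simp only [hρ]; linarith
  have hrδ : ∀ k, (ρ k).rOut ≤ δ := by
    intro k; simp only [hρ]
    exact div_le_self hδ.le (by linarith [(Nat.cast_nonneg k : (0:ℝ) ≤ k)])
  have hψc : Continuous ψ := continuous_iff_continuousAt.2 fun t => (hψ t).continuousAt
  obtain ⟨Ifk, Lf⟩ := mollify_L1 (K.indicator f) hfi ρ hr0 hrK
  obtain ⟨Ivk, Lv⟩ := mollify_L1 (K.indicator v) hvi ρ hr0 hrK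
  have hae := ContDiffBump.ae_convolution_tendsto_right_of_locallyIntegrable hr0
    (Eventually.of_forall hrK) hfi.locallyIntegrable
  have hgrad : ∀ k, ∀ x ∈ tsupport φ, HasGradientAt _ _ x := fun k x hx =>
    grad_mollify f v U K hw hKm hU.measurableSet hδU hfK hvK (ρ k) x
      ((closedBall_subset_closedBall (hrδ k)).trans (closedBall_subset_cthickening hx δ))
  have hfc : ∀ k, Continuous ((ρ k).normed volume ⋆[ContinuousLinearMap.lsmul ℝ ℝ, volume]
      (K.indicator f)) := fun k => (ρ k).hasCompactSupport_normed.continuous_convolution_left _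
        (ρ k).continuous_normed hfi.locallyIntegrable
  have hvc : ∀ k, Continuous ((ρ k).normed volume ⋆[ContinuousLinearMap.lsmul ℝ ℝ, volume]
      (K.indicator v)) := fun k => (ρ k).hasCompactSupport_normed.continuous_convolution_left _
        (ρ k).continuous_normed hvi.locallyIntegrable
  set F := fun k => (ρ k).normed volume ⋆[ContinuousLinearMap.lsmul ℝ ℝ, volume] (K.indicator f)
    with hF
  set V := fun k => (ρ k).normed volume ⋆[ContinuousLinearMap.lsmul ℝ ℝ, volume] (K.indicator v)
    with hV
  set f0 := K.indicator f with hf0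
  set v0 := K.indicator v with hv0
  have hk : ∀ k, ∫ x, ψ (F k x) • gradient φ x = - ∫ x, φ x • (ψ' (F k x) • V k x) := by
    intro k
    refine ibp_smooth (fun x => ψ (F k x)) (fun x => ψ' (F k x) • V k x) (hψc.comp (hfc k))
      ((hψ'.comp (hfc k)).smul (hvc k)) φ hφc hφs fun x hx => ?_
    have h1 := (hgrad k x hx).hasFDerivAt
    have h2 := (hψ (F k x)).comp_hasFDerivAt x h1
    rw [hasGradientAt_iff_hasFDerivAt]
    refine h2.congr_fderiv ?_
    rw [map_smul]
  obtain ⟨M1, hM1⟩ := (gradient_cont φ hφc).bounded_above_of_compact_support (gradient_hcs φ hφs)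
  obtain ⟨M2, hM2⟩ := hφc.continuous.bounded_above_of_compact_support hφs
  have hM2' : 0 ≤ M2 := (norm_nonneg _).trans (hM2 0)
  -- left limit
  have iψ : LocallyIntegrable (fun x => ψ (f0 x)) volume := by
    have : LocallyIntegrable (fun x => |ψ 0| + ‖f0 x‖) volume :=
      (locallyIntegrable_const _).add hfi.norm.locallyIntegrable
    refine this.mono (hψc.comp_aestronglyMeasurable hfi.aestronglyMeasurable)
      (Eventually.of_forall fun x => ?_)
    have h1 := lip_bound hψ hb (f0 x) 0
    rw [Real.norm_eq_abs, Real.norm_eq_abs, Real.norm_eq_abs]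
    have h2 := abs_sub_abs_le_abs_sub (ψ (f0 x)) (ψ 0)
    rw [sub_zero] at h1
    rw [abs_of_nonneg (a := |ψ 0| + |f0 x|) (by positivity)]
    linarith
  have iA : Integrable (fun x => ψ (f0 x) • gradient φ x) volume :=
    iψ.integrable_smul_right_of_hasCompactSupport (gradient_cont φ hφc) (gradient_hcs φ hφs)
  have iAk : ∀ k, Integrable (fun x => ψ (F k x) • gradient φ x) volume := fun k =>
    ((hψc.comp (hfc k)).smul (gradient_cont φ hφc)).integrable_of_hasCompactSupport
      (gradient_hcs φ hφs).smul_left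
  have tA : Tendsto (fun k => ∫ x, ψ (F k x) • gradient φ x) atTop
      (𝓝 (∫ x, ψ (f0 x) • gradient φ x)) := by
    rw [tendsto_iff_norm_sub_tendsto_zero]
    have := Lf.const_mul M1
    rw [mul_zero] at this
    refine squeeze_zero (fun k => norm_nonneg _) (fun k => ?_) this
    rw [← integral_sub (iAk k) iA, ← integral_const_mul]
    refine norm_integral_le_of_norm_le (((Ifk k).sub hfi).norm.const_mul M1)
      (Eventually.of_forall fun x => ?_)
    rw [← sub_smul, norm_smul, mul_comm]
    exact mul_le_mul (hM1 x) (lip_bound hψ hb _ _) (norm_nonneg _) ((norm_nonneg _).trans (hM1 x))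
  -- right limit
  have bd : ∀ (t : ℝ) (x y : En n), ‖φ x • (ψ' t • y)‖ ≤ M2 * ‖y‖ := by
    intro t x y
    rw [norm_smul, norm_smul]
    have := hb t
    refine mul_le_mul (hM2 x) ?_ (by positivity) hM2'
    exact mul_le_of_le_one_left (norm_nonneg _) this
  have iB1 : ∀ k, Integrable (fun x => φ x • (ψ' (F k x) • v0 x)) volume := fun k =>
    (hvi.norm.const_mul M2).mono' (hφc.continuous.aestronglyMeasurable.smul
      ((hψ'.comp (hfc k)).aestronglyMeasurable.smul hvi.aestronglyMeasurable))
      (Eventually.of_forall fun x => bd _ _ _)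
  have iBk : ∀ k, Integrable (fun x => φ x • (ψ' (F k x) • V k x)) volume := fun k =>
    ((Ivk k).norm.const_mul M2).mono' (hφc.continuous.aestronglyMeasurable.smul
      ((hψ'.comp (hfc k)).aestronglyMeasurable.smul (Ivk k).aestronglyMeasurable))
      (Eventually.of_forall fun x => bd _ _ _)
  have tB1 : Tendsto (fun k => ∫ x, φ x • (ψ' (F k x) • v0 x)) atTop
      (𝓝 (∫ x, φ x • (ψ' (f0 x) • v0 x))) := by
    refine tendsto_integral_of_dominated_convergence (fun x => M2 * ‖v0 x‖)
      (fun k => (iB1 k).aestronglyMeasurable) (hvi.norm.const_mul M2)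
      (fun k => Eventually.of_forall fun x => bd _ _ _) ?_
    filter_upwards [hae] with x hx
    exact (((hψ'.tendsto _).comp hx).smul_const _).const_smul _
  have tB2 : Tendsto (fun k => ∫ x, φ x • (ψ' (F k x) • (V k x - v0 x))) atTop (𝓝 0) := by
    have := Lv.const_mul M2
    rw [mul_zero] at this
    refine squeeze_zero_norm (fun k => ?_) this
    rw [← integral_const_mul]
    exact norm_integral_le_of_norm_le (((Ivk k).sub hvi).norm.const_mul M2)
      (Eventually.of_forall fun x => bd _ _ _)
  have tB : Tendsto (fun k => ∫ x, φ x • (ψ' (F k x) • V k x)) atTop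
      (𝓝 (∫ x, φ x • (ψ' (f0 x) • v0 x))) := by
    have := tB2.add tB1
    rw [zero_add] at this
    refine this.congr fun k => ?_
    have e : ∀ x, φ x • (ψ' (F k x) • (V k x - v0 x)) =
      φ x • (ψ' (F k x) • V k x) - φ x • (ψ' (F k x) • v0 x) := by
      intro x; rw [smul_sub, smul_sub]
    simp_rw [e]
    rw [integral_sub (iBk k) (iB1 k), sub_add_cancel]
  have fin : ∫ x, ψ (f0 x) • gradient φ x = - ∫ x, φ x • (ψ' (f0 x) • v0 x) :=
    tendsto_nhds_unique tA (by simpa only [hk] using tB.neg)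
  have e1 : ∫ x in U, ψ (f x) • gradient φ x = ∫ x, ψ (f0 x) • gradient φ x := by
    rw [← integral_indicator hU.measurableSet]
    congr 1; ext1 y
    by_cases hy : y ∈ K
    · rw [hf0, indicator_of_mem hy, indicator_of_mem (hδU hy)]
    · rw [indicator, gradient_zero_of_notMem φ y fun h => hy (hsK h)]; simp
  have e2 : ∫ x in U, φ x • (ψ' (f x) • v x) = ∫ x, φ x • (ψ' (f0 x) • v0 x) := by
    rw [← integral_indicator hU.measurableSet]
    congr 1; ext1 y
    by_cases hy : y ∈ K
    · rw [hf0, hv0, indicator_of_mem hy, indicator_of_mem hy, indicator_of_mem (hδU hy)]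
    · rw [indicator, image_eq_zero_of_notMem_tsupport fun h => hy (hsK h)]; simp
  rw [e1, e2, fin]
lemma hat_facts {n : ℕ} (hn : 1 ≤ n) (Ω Ot : Set (En n))
    (hΩopen : IsOpen Ω) (hΩbdd : Bornology.IsBounded Ω)
    (hcov : Ω ⊆ Ot) (hcovnull : volume (Ot \ Ω) = 0) :
    IsOpen (hatSet Ot) ∧ Ω ⊆ hatSet Ot ∧ (hatSet Ot)ᶜ.Nonempty := by
  have hne : Otᶜ.Nonempty := by
    by_contra h
    rw [not_nonempty_iff_eq_empty, compl_empty_iff] at h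
    have : Nonempty (Fin n) := ⟨⟨0, hn⟩⟩
    have : NoncompactSpace (En n) := NormedSpace.noncompactSpace ℝ (En n)
    have h1 : volume (univ : Set (En n)) = ∞ := measure_univ_of_isAddLeftInvariant _
    have h2 : volume (univ : Set (En n)) ≤ volume Ω + volume (Ot \ Ω) := by
      refine (measure_mono ?_).trans (measure_union_le _ _)
      rw [union_sdiff_self, h]; simp
    rw [h1, hcovnull, add_zero, top_le_iff] at h2
    exact hΩbdd.measure_lt_top.ne h2
  have heq : hatSet Ot = {x | 0 < infDist x Otᶜ} := by
    ext x
    refine ⟨fun h => h.2, fun h => ⟨?_, h⟩⟩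
    by_contra hx
    have : infDist x Otᶜ = 0 := infDist_zero_of_mem hx
    exact absurd h (by simp [this])
  refine ⟨?_, ?_, ?_⟩
  · rw [heq]; exact isOpen_lt continuous_const (continuous_infDist_pt _)
  · intro x hx
    rw [heq]
    obtain ⟨ε, hε, hb⟩ := Metric.isOpen_iff.1 hΩopen x hx
    refine lt_of_lt_of_le hε ((le_infDist hne).2 fun y hy => ?_)
    by_contra h
    push Not at h
    exact hy (hcov (hb (by rw [mem_ball, dist_comm]; exact h)))
  · exact hne.mono (compl_subset_compl.2 fun x hx => hx.1)

lemma memG_v_compact {n : ℕ} (hn : 1 ≤ n) {U : Set (En n)} (hU : IsOpen U) (hne : Uᶜ.Nonempty)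
    {f : En n → ℝ} {v : En n → En n} (h : MemG U f v) (K : Set (En n)) (hKU : K ⊆ U)
    (hK : IsCompact K) : IntegrableOn v K volume := by
  obtain ⟨δ, hδ, hsub⟩ := hK.exists_cthickening_subset_open hU hKU
  obtain ⟨r, hr, hm⟩ := h.2.2 (δ / 2) (by positivity)
  have hsub2 : K ⊆ {x ∈ U | δ / 2 < infDist x Uᶜ} := by
    intro x hx
    refine ⟨hKU hx, lt_of_lt_of_le (half_lt_self hδ) ((le_infDist hne).2 fun y hy => ?_)⟩
    by_contra h
    push Not at h
    exact hy (hsub (closedBall_subset_cthickening hx δ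
      (by rw [mem_closedBall, dist_comm]; exact h.le)))
  have hm2 : MemLp v (ENNReal.ofReal r) (volume.restrict K) :=
    hm.mono_measure (Measure.restrict_mono hsub2 le_rfl)
  have : IsFiniteMeasure (volume.restrict K) :=
    ⟨by rw [Measure.restrict_apply_univ]; exact hK.measure_lt_top⟩
  refine hm2.integrable ?_
  rw [← ENNReal.ofReal_one]
  refine ENNReal.ofReal_le_ofReal ?_
  have : (1 : ℝ) ≤ n := by exact_mod_cast hn
  linarith

lemma memG_v_aesm {n : ℕ} (hn : 1 ≤ n) {U : Set (En n)} (hU : IsOpen U) (hne : Uᶜ.Nonempty)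
    {f : En n → ℝ} {v : En n → En n} (h : MemG U f v) :
    AEStronglyMeasurable v (volume.restrict U) := by
  have : LocallyIntegrableOn v U volume :=
    (locallyIntegrableOn_iff hU.isLocallyClosed).2 (memG_v_compact hn hU hne h)
  exact this.aestronglyMeasurable

lemma memG_comp {n : ℕ} (hn : 1 ≤ n) {U : Set (En n)} (hU : IsOpen U) (hne : Uᶜ.Nonempty)
    {f : En n → ℝ} {v : En n → En n} (h : MemG U f v)
    (ψ ψ' : ℝ → ℝ) (hψ : ∀ t, HasDerivAt ψ (ψ' t) t)
    (hψ' : Continuous ψ') (hb : ∀ t, |ψ' t| ≤ 1) :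
    MemG U (fun x => ψ (f x)) (fun x => ψ' (f x) • v x) := by
  have hψc : Continuous ψ := continuous_iff_continuousAt.2 fun t => (hψ t).continuousAt
  have hfK : ∀ K ⊆ U, IsCompact K → IntegrableOn f K volume := fun K hKU hK =>
    h.1.integrableOn_compact_subset hKU hK
  refine ⟨?_, weak_chain f v U hU hfK (memG_v_compact hn hU hne h) h.2.1 ψ ψ' hψ hψ' hb, ?_⟩
  · refine (locallyIntegrableOn_iff hU.isLocallyClosed).2 fun K hKU hK => ?_
    have h1 := hfK K hKU hK
    have h2 : IntegrableOn (fun x => |ψ 0| + ‖f x‖) K volume :=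
      (integrableOn_const hK.measure_lt_top.ne).add h1.norm
    refine Integrable.mono' h2 (hψc.comp_aestronglyMeasurable h1.aestronglyMeasurable)
      (Filter.Eventually.of_forall fun x => ?_)
    have h1 := lip_bound hψ hb (f x) 0
    rw [Real.norm_eq_abs, Real.norm_eq_abs]
    have h2 := abs_sub_abs_le_abs_sub (ψ (f x)) (ψ 0)
    rw [sub_zero] at h1
    linarith
  · intro δ hδ
    obtain ⟨r, hr, hm⟩ := h.2.2 δ hδ
    refine ⟨r, hr, hm.of_le ?_ (Filter.Eventually.of_forall fun x => ?_)⟩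
    · have : AEStronglyMeasurable f (volume.restrict {x ∈ U | δ < infDist x Uᶜ}) :=
        h.1.aestronglyMeasurable.mono_measure (Measure.restrict_mono (fun x hx => hx.1) le_rfl)
      exact (hψ'.comp_aestronglyMeasurable this).smul hm.aestronglyMeasurable
    · rw [norm_smul]
      exact mul_le_of_le_one_left (norm_nonneg _) (hb _)

open Filter Topology in
lemma exists_median {α : Type*} [MeasurableSpace α] (μ : Measure α) [IsFiniteMeasure μ]
    (hμ : μ ≠ 0) (f : α → ℝ) (hf : AEMeasurable f μ) :
    ∃ c : ℝ, μ univ ≤ 2 * μ {x | f x ≤ c} ∧ μ univ ≤ 2 * μ {x | c ≤ f x} := by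
  set m := μ.map f with hm
  have hu : m univ = μ univ := by rw [hm, Measure.map_apply_of_aemeasurable hf MeasurableSet.univ]; simp
  have hpos : 0 < μ univ := by simpa [pos_iff_ne_zero] using hμ
  have hfin : μ univ ≠ ∞ := measure_ne_top _ _
  have hhalf : μ univ / 2 < μ univ := ENNReal.half_lt_self hpos.ne' hfin
  suffices ∃ c : ℝ, m univ ≤ 2 * m (Iic c) ∧ m univ ≤ 2 * m (Ici c) by
    obtain ⟨c, h1, h2⟩ := this
    refine ⟨c, ?_, ?_⟩
    · rwa [hu, hm, Measure.map_apply_of_aemeasurable hf measurableSet_Iic] at h1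
    · rwa [hu, hm, Measure.map_apply_of_aemeasurable hf measurableSet_Ici] at h2
  set S := {t : ℝ | μ univ / 2 ≤ m (Iic t)} with hS
  have hSne : S.Nonempty := by
    have h1 : Tendsto (fun t : ℝ => m (Iic t)) atTop (𝓝 (m univ)) := tendsto_measure_Iic_atTop m
    rw [hu] at h1
    obtain ⟨t, ht⟩ := (h1.eventually (lt_mem_nhds hhalf)).exists
    exact ⟨t, le_of_lt ht⟩
  have hSb : BddBelow S := by
    have h1 : Tendsto (fun t : ℝ => m (Iic t)) atBot (𝓝 0) := by
      have h0 := tendsto_measure_iInter_atBot (μ := m) (s := fun t : ℝ => Iic t)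
        (fun i => measurableSet_Iic.nullMeasurableSet) (fun i j hij => Iic_subset_Iic.2 hij)
        ⟨0, measure_ne_top _ _⟩
      have h3 : (⋂ t : ℝ, Iic t) = ∅ := by
        ext x
        simp only [mem_iInter, mem_Iic, mem_empty_iff_false, iff_false, not_forall, not_le]
        exact ⟨x - 1, by linarith⟩
      rw [h3, measure_empty] at h0
      exact h0
    have h2 : 0 < μ univ / 2 := ENNReal.half_pos hpos.ne'
    obtain ⟨t, ht⟩ := (h1.eventually (gt_mem_nhds h2)).exists
    refine ⟨t, fun s hs => ?_⟩
    by_contra h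
    push Not at h
    exact absurd (hs.trans (measure_mono (Iic_subset_Iic.2 h.le))) (not_le.2 ht)
  refine ⟨sInf S, ?_, ?_⟩
  · have h1 : Tendsto (fun t : ℝ => m (Iic t)) (𝓝[>] (sInf S)) (𝓝 (m (⋂ r > sInf S, Iic r))) :=
      tendsto_measure_biInter_gt (fun r _ => measurableSet_Iic.nullMeasurableSet)
        (fun i j _ hij => Iic_subset_Iic.2 hij) ⟨sInf S + 1, by simp, measure_ne_top _ _⟩
    have h2 : (⋂ r > sInf S, Iic r) = Iic (sInf S) := by
      ext x
      simp only [mem_iInter, mem_Iic]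
      exact ⟨fun h => le_of_forall_gt_imp_ge_of_dense h, fun h r hr => h.trans hr.le⟩
    rw [h2] at h1
    have h3 : μ univ / 2 ≤ m (Iic (sInf S)) := by
      refine ge_of_tendsto h1 ?_
      filter_upwards [self_mem_nhdsWithin] with t ht
      obtain ⟨s, hs, hst⟩ := exists_lt_of_csInf_lt hSne ht
      exact hs.trans (measure_mono (Iic_subset_Iic.2 hst.le))
    rw [hu]
    rw [ENNReal.div_le_iff (by simp) (by simp)] at h3
    rwa [mul_comm]
  · obtain ⟨u, hum, hult, hut⟩ := exists_seq_strictMono_tendsto (sInf S)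
    have h1 : Tendsto (fun k => m (Iic (u k))) atTop (𝓝 (m (⋃ k, Iic (u k)))) :=
      tendsto_measure_iUnion_atTop fun i j hij => Iic_subset_Iic.2 (hum.monotone hij)
    rw [iUnion_Iic_eq_Iio_of_lt_of_tendsto hult hut] at h1
    have h2 : m (Iio (sInf S)) ≤ μ univ / 2 := by
      refine le_of_tendsto' h1 fun k => ?_
      by_contra h
      push Not at h
      exact absurd (csInf_le hSb (show u k ∈ S from h.le)) (not_le.2 (hult k))
    have h3 : m univ ≤ m (Iio (sInf S)) + m (Ici (sInf S)) := by
      rw [← Iio_union_Ici (a := sInf S)]; exact measure_union_le _ _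
    rw [hu] at h3 ⊢
    have h4 : μ univ / 2 ≤ m (Ici (sInf S)) := by
      have h5 : μ univ / 2 + μ univ / 2 ≤ μ univ / 2 + m (Ici (sInf S)) := by
        rw [ENNReal.add_halves]; exact h3.trans (by gcongr)
      exact (ENNReal.add_le_add_iff_left (ENNReal.div_ne_top hfin (by simp))).1 h5
    rw [ENNReal.div_le_iff (by simp) (by simp)] at h4
    rwa [mul_comm]
/-- Smooth version of the positive part. -/
lemma psiPlus_deriv (s : ℝ) (hs : 0 < s) (t : ℝ) :
    HasDerivAt (fun t => √(s ^ 2 + (max t 0) ^ 2) - s) (max t 0 / √(s ^ 2 + (max t 0) ^ 2)) t := by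
  have hsq : ∀ t : ℝ, HasDerivAt (fun t => (max t 0) ^ 2) (2 * max t 0) t := by
    have hne : ∀ y : ℝ, y ≠ 0 → HasDerivAt (fun t => (max t 0) ^ 2) (2 * max y 0) y := by
      intro y hy
      rcases lt_or_gt_of_ne hy with h | h
      · have : (fun t : ℝ => (max t 0) ^ 2) =ᶠ[nhds y] fun _ => 0 := by
          filter_upwards [gt_mem_nhds h] with t ht
          rw [max_eq_right ht.le]; simp
        rw [max_eq_right h.le, mul_zero]
        exact (hasDerivAt_const y (0:ℝ)).congr_of_eventuallyEq this
      · have : (fun t : ℝ => (max t 0) ^ 2) =ᶠ[nhds y] fun t => t ^ 2 := by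
          filter_upwards [lt_mem_nhds h] with t ht
          rw [max_eq_left ht.le]
        rw [max_eq_left h.le]
        have h2 := (hasDerivAt_pow 2 y).congr_of_eventuallyEq this
        simpa using h2
    intro t
    by_cases ht : t = 0
    · subst ht
      exact hasDerivAt_of_hasDerivAt_of_ne (g := fun y => 2 * max y 0) hne
        (by fun_prop) (by fun_prop)
    · exact hne t ht
  have h1 : HasDerivAt (fun t => s ^ 2 + (max t 0) ^ 2) (2 * max t 0) t := (hsq t).const_add _
  have h2 := (h1.sqrt (by positivity)).sub_const s
  refine h2.congr_deriv ?_
  field_simp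

lemma psiPlus_cont (s : ℝ) (hs : 0 < s) :
    Continuous (fun t : ℝ => max t 0 / √(s ^ 2 + (max t 0) ^ 2)) := by
  refine Continuous.div (by fun_prop) (by fun_prop) fun t => ?_
  positivity

lemma psiPlus_bd (s : ℝ) (t : ℝ) : |max t 0 / √(s ^ 2 + (max t 0) ^ 2)| ≤ 1 := by
  rw [abs_of_nonneg (by positivity)]
  refine div_le_one_of_le₀ ?_ (by positivity)
  exact Real.le_sqrt_of_sq_le (by nlinarith [sq_nonneg s])

lemma psiPlus_ge (s : ℝ) (t : ℝ) : max t 0 ≤ (√(s ^ 2 + (max t 0) ^ 2) - s) + s := by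
  have := Real.le_sqrt_of_sq_le (x := max t 0) (y := s ^ 2 + (max t 0) ^ 2)
    (by nlinarith [sq_nonneg s])
  linarith

lemma psiPlus_zero (s : ℝ) (hs : 0 < s) (t : ℝ) (ht : t ≤ 0) : √(s ^ 2 + (max t 0) ^ 2) - s = 0 := by
  rw [max_eq_right ht]; simp [Real.sqrt_sq hs.le]

lemma psiAt_deriv (s : ℝ) (hs : 0 < s) (t : ℝ) :
    HasDerivAt (fun t => s⁻¹ * Real.arctan (s * t)) (1 / (1 + (s * t) ^ 2)) t := by
  have h1 : HasDerivAt (fun t => s * t) s t := by simpa using (hasDerivAt_id t).const_mul s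
  have h2 := (h1.arctan).const_mul s⁻¹
  refine h2.congr_deriv ?_
  field_simp

lemma psiAt_cont (s : ℝ) : Continuous (fun t : ℝ => 1 / (1 + (s * t) ^ 2)) := by
  refine Continuous.div (by fun_prop) (by fun_prop) fun t => ?_
  positivity

lemma psiAt_bd (s : ℝ) (t : ℝ) : |1 / (1 + (s * t) ^ 2)| ≤ 1 := by
  rw [abs_of_nonneg (by positivity)]
  exact div_le_one_of_le₀ (by nlinarith [sq_nonneg (s * t)]) (by positivity)

open Filter Topology in
lemma psiAt_tendsto (t : ℝ) : Tendsto (fun k : ℕ => (1 / ((k : ℝ) + 1))⁻¹ *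
    Real.arctan ((1 / ((k : ℝ) + 1)) * t)) atTop (𝓝 t) := by
  have h1 : HasDerivAt (fun s => s * t) t (0 : ℝ) := by simpa using (hasDerivAt_id (0:ℝ)).mul_const t
  have h2 := h1.arctan.tendsto_slope_zero_right
  have h3 : Tendsto (fun k : ℕ => 1 / ((k : ℝ) + 1)) atTop (𝓝[>] 0) :=
    tendsto_nhdsWithin_iff.2 ⟨tendsto_one_div_add_atTop_nhds_zero_nat,
      Eventually.of_forall fun k => by simp only [mem_Ioi]; positivity⟩
  have h4 := h2.comp h3
  simpa [Function.comp_def] using h4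

section cases_
variable {n : ℕ} {Ω U : Set (En n)} {μ0 : Measure (En n)} {w : En n → ℝ}

lemma vw_int (hn : 1 ≤ n) (hU : IsOpen U) (hne : Uᶜ.Nonempty) (hΩU : Ω ⊆ U)
    (hwint : IntegrableOn w Ω volume)
    {f : En n → ℝ} {v : En n → En n} (h : MemG U f v) :
    AEStronglyMeasurable (fun x => ‖v x‖ * w x) (volume.restrict Ω) := by
  have := (memG_v_aesm hn hU hne h).mono_measure (Measure.restrict_mono hΩU le_rfl)
  exact this.norm.mul hwint.aestronglyMeasurable

lemma f_aesm (hΩU : Ω ⊆ U) (hac : μ0 ≪ volume)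
    {f : En n → ℝ} {v : En n → En n} (h : MemG U f v) :
    AEStronglyMeasurable f (μ0.restrict Ω) := by
  have := h.1.aestronglyMeasurable.mono_measure (Measure.restrict_mono hΩU le_rfl)
  exact this.mono_ac (hac.restrict Ω)

open Filter Topology in
lemma P1_to_star (hn : 1 ≤ n) (hU : IsOpen U) (hne : Uᶜ.Nonempty) (hΩ : MeasurableSet Ω)
    (hΩU : Ω ⊆ U) [IsFiniteMeasure μ0] (hres : μ0.restrict Ω = μ0) (hac : μ0 ≪ volume)
    (hwint : IntegrableOn w Ω volume) (hwpos : ∀ᵐ x ∂volume.restrict Ω, 0 < w x)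
    (hP : P1 Ω U μ0 w) : P1star Ω U μ0 w := by
  obtain ⟨C, hC, hP⟩ := hP
  refine ⟨C, hC, fun f v hG hE => ?_⟩
  set E := {x ∈ Ω | f x = 0} with hEdef
  set I := ∫⁻ x in Ω, ENNReal.ofReal (‖v x‖ * w x) with hI
  by_cases hItop : I = ∞
  · rw [hItop, ENNReal.mul_top]
    · exact le_top
    · refine mul_ne_zero (by simpa using hC) ?_
      simp
  have hvwm := vw_int hn hU hne hΩU hwint hG
  have hvwnn : 0 ≤ᵐ[volume.restrict Ω] fun x => ‖v x‖ * w x := by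
    filter_upwards [hwpos] with x hx
    exact mul_nonneg (norm_nonneg _) hx.le
  have hvwi : IntegrableOn (fun x => ‖v x‖ * w x) Ω volume :=
    ⟨hvwm, by rw [hasFiniteIntegral_iff_ofReal hvwnn]; exact lt_top_iff_ne_top.2 hItop⟩
  have hIJ : ENNReal.ofReal (∫ x in Ω, ‖v x‖ * w x) = I :=
    ofReal_integral_eq_lintegral_ofReal hvwi hvwnn
  have hfm := f_aesm hΩU hac hG
  set g : ℕ → En n → ℝ := fun k x => (1 / ((k : ℝ) + 1))⁻¹ *
    Real.arctan ((1 / ((k : ℝ) + 1)) * f x) with hg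
  have hgm : ∀ k, AEStronglyMeasurable (g k) (μ0.restrict Ω) := by
    intro k
    have : Continuous fun t : ℝ => (1 / ((k : ℝ) + 1))⁻¹ * Real.arctan ((1 / ((k : ℝ) + 1)) * t) := by
      fun_prop
    exact this.comp_aestronglyMeasurable hfm
  have main : ∀ k, ∫⁻ x in Ω, ENNReal.ofReal |g k x| ∂μ0 ≤
      ENNReal.ofReal C * (1 + μ0 Ω / μ0 E) * I := by
    intro k
    have hs : 0 < 1 / ((k : ℝ) + 1) := by positivity
    set s := 1 / ((k : ℝ) + 1) with hsdef
    have hGk : MemG U (g k) (fun x => (1 / (1 + (s * f x) ^ 2)) • v x) :=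
      memG_comp hn hU hne hG _ _ (psiAt_deriv s hs) (psiAt_cont s) (psiAt_bd s)
    have hgi : Integrable (g k) (μ0.restrict Ω) := by
      refine Integrable.of_bound (hgm k) (s⁻¹ * (Real.pi / 2)) (Eventually.of_forall fun x => ?_)
      rw [hg, norm_mul, Real.norm_of_nonneg (inv_nonneg.2 hs.le)]
      gcongr
      rw [Real.norm_eq_abs, abs_le]
      exact ⟨(Real.neg_pi_div_two_lt_arctan _).le, (Real.arctan_lt_pi_div_two _).le⟩
    have hle : ∀ᵐ x ∂volume.restrict Ω, ‖(1 / (1 + (s * f x) ^ 2)) • v x‖ * w x ≤ ‖v x‖ * w x := by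
      filter_upwards [hwpos] with x hx
      refine mul_le_mul_of_nonneg_right ?_ hx.le
      rw [norm_smul]
      exact mul_le_of_le_one_left (norm_nonneg _) (psiAt_bd s (f x))
    have hvki : IntegrableOn (fun x => ‖(1 / (1 + (s * f x) ^ 2)) • v x‖ * w x) Ω volume := by
      refine Integrable.mono' hvwi (vw_int hn hU hne hΩU hwint hGk) ?_
      filter_upwards [hwpos, hle] with x hx hx2
      rwa [Real.norm_of_nonneg (by positivity)]
    have h1 := hP (g k) _ ⟨hGk, by rwa [hres] at hgi, hvki⟩
    set a := (∫ y in Ω, g k y ∂μ0) / (μ0 Ω).toReal with ha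
    have h2 : ∫ x in Ω, |g k x - a| ∂μ0 ≤ C * ∫ x in Ω, ‖v x‖ * w x :=
      h1.trans (mul_le_mul_of_nonneg_left (integral_mono_ae hvki hvwi hle) hC.le)
    have hgai : Integrable (fun x => |g k x - a|) (μ0.restrict Ω) :=
      (hgi.sub (integrable_const a)).abs
    set X := ∫⁻ x in Ω, ENNReal.ofReal |g k x - a| ∂μ0 with hX
    have h3 : X ≤ ENNReal.ofReal C * I := by
      rw [hX, ← ofReal_integral_eq_lintegral_ofReal hgai (Eventually.of_forall fun x => abs_nonneg _),
        ← hIJ, ← ENNReal.ofReal_mul hC.le]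
      exact ENNReal.ofReal_le_ofReal h2
    have h4 : ENNReal.ofReal |a| * μ0 E ≤ X := by
      refine le_trans ?_ (mul_meas_ge_le_lintegral₀ hgai.aestronglyMeasurable.aemeasurable.ennreal_ofReal
        (ENNReal.ofReal |a|))
      rw [hres]
      gcongr
      intro x hx
      have : g k x = 0 := by simp [hg, hx.2]
      simp [this]
    have hE' : μ0 E ≠ ∞ := measure_ne_top _ _
    have h5 : ENNReal.ofReal |a| ≤ ENNReal.ofReal C * I / μ0 E :=
      (ENNReal.le_div_iff_mul_le (Or.inl hE.ne') (Or.inl hE')).2 (h4.trans h3)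
    calc ∫⁻ x in Ω, ENNReal.ofReal |g k x| ∂μ0
        ≤ ∫⁻ x in Ω, (ENNReal.ofReal |g k x - a| + ENNReal.ofReal |a|) ∂μ0 := by
          refine lintegral_mono fun x => ?_
          rw [← ENNReal.ofReal_add (abs_nonneg _) (abs_nonneg _)]
          refine ENNReal.ofReal_le_ofReal ?_
          have := abs_add_le (g k x - a) a
          simpa using this
      _ = X + ENNReal.ofReal |a| * μ0 Ω := by
          rw [lintegral_add_right _ measurable_const, lintegral_const, Measure.restrict_apply_univ]
      _ ≤ ENNReal.ofReal C * I + ENNReal.ofReal C * I / μ0 E * μ0 Ω := by gcongr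
      _ = ENNReal.ofReal C * (1 + μ0 Ω / μ0 E) * I := by
          simp only [div_eq_mul_inv]; ring
  calc ∫⁻ x in Ω, ENNReal.ofReal |f x| ∂μ0
      = ∫⁻ x in Ω, liminf (fun k => ENNReal.ofReal |g k x|) atTop ∂μ0 := by
        refine lintegral_congr fun x => ?_
        refine (Tendsto.liminf_eq ?_).symm
        exact ENNReal.tendsto_ofReal (psiAt_tendsto (f x)).abs
    _ ≤ liminf (fun k => ∫⁻ x in Ω, ENNReal.ofReal |g k x| ∂μ0) atTop :=
        lintegral_liminf_le' fun k =>
          (continuous_abs.comp_aestronglyMeasurable (hgm k)).aemeasurable.ennreal_ofReal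
    _ ≤ _ := by
        refine liminf_le_of_frequently_le' (Frequently.of_forall main)

open Filter Topology in
lemma star_to_P1 (hn : 1 ≤ n) (hU : IsOpen U) (hne : Uᶜ.Nonempty) (hΩ : MeasurableSet Ω)
    (hΩU : Ω ⊆ U) [IsFiniteMeasure μ0] (hμ0 : μ0 ≠ 0) (hres : μ0.restrict Ω = μ0)
    (hwint : IntegrableOn w Ω volume) (hwpos : ∀ᵐ x ∂volume.restrict Ω, 0 < w x)
    (hP : P1star Ω U μ0 w) : P1 Ω U μ0 w := by
  obtain ⟨C, hC, hP⟩ := hP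
  refine ⟨12 * C, by positivity, fun f v ⟨hG, hfi, hvwi⟩ => ?_⟩
  obtain ⟨c, hc1, hc2⟩ := exists_median μ0 hμ0 f hfi.aestronglyMeasurable.aemeasurable
  have huniv : μ0 univ = μ0 Ω := by rw [← hres, Measure.restrict_apply_univ, hres]
  have hΩpos : μ0 Ω ≠ 0 := by rw [← huniv]; simpa using hμ0
  have hvwnn : 0 ≤ᵐ[volume.restrict Ω] fun x => ‖v x‖ * w x := by
    filter_upwards [hwpos] with x hx
    exact mul_nonneg (norm_nonneg _) hx.le
  set I := ∫⁻ x in Ω, ENNReal.ofReal (‖v x‖ * w x) with hI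
  have hIJ : ENNReal.ofReal (∫ x in Ω, ‖v x‖ * w x) = I :=
    ofReal_integral_eq_lintegral_ofReal hvwi hvwnn
  have half : ∀ σ : ℝ, |σ| ≤ 1 → μ0 univ ≤ 2 * μ0 {x | σ * (f x - c) ≤ 0} →
      ∫⁻ x, ENNReal.ofReal (max (σ * (f x - c)) 0) ∂μ0 ≤ ENNReal.ofReal C * 3 * I := by
    intro σ hσ hm
    have step : ∀ s : ℝ, 0 < s → ∫⁻ x, ENNReal.ofReal (max (σ * (f x - c)) 0) ∂μ0 ≤
        ENNReal.ofReal C * 3 * I + ENNReal.ofReal s * μ0 Ω := by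
      intro s hs
      set ψ : ℝ → ℝ := fun t => √(s ^ 2 + (max (σ * (t - c)) 0) ^ 2) - s with hψ
      set ψ' : ℝ → ℝ := fun t => (max (σ * (t - c)) 0 / √(s ^ 2 + (max (σ * (t - c)) 0) ^ 2)) * σ
        with hψ'
      have hbd : ∀ t, |ψ' t| ≤ 1 := by
        intro t
        rw [hψ', abs_mul]
        exact mul_le_one₀ (psiPlus_bd s _) (abs_nonneg _) hσ
      have hGk : MemG U (fun x => ψ (f x)) (fun x => ψ' (f x) • v x) := by
        refine memG_comp hn hU hne hG ψ ψ' (fun t => ?_) ?_ hbd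
        · have h1 : HasDerivAt (fun t => σ * (t - c)) σ t := by
            simpa using ((hasDerivAt_id t).sub_const c).const_mul σ
          exact (psiPlus_deriv s hs (σ * (t - c))).comp t h1
        · exact ((psiPlus_cont s hs).comp (by fun_prop : Continuous fun t => σ * (t - c))).mul_const σ
      have hsub : μ0 {x | σ * (f x - c) ≤ 0} ≤ μ0 {x ∈ Ω | ψ (f x) = 0} := by
        conv_lhs => rw [← hres]
        rw [Measure.restrict_apply' hΩ]
        refine measure_mono fun x hx => ⟨hx.2, psiPlus_zero s hs _ hx.1⟩
      have hm2 : μ0 Ω ≤ 2 * μ0 {x ∈ Ω | ψ (f x) = 0} := by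
        rw [← huniv]; exact hm.trans (by gcongr)
      have hEpos : 0 < μ0 {x ∈ Ω | ψ (f x) = 0} := by
        rw [pos_iff_ne_zero]
        intro h0
        rw [h0, mul_zero] at hm2
        exact hΩpos (le_antisymm hm2 zero_le)
      have h1 := hP _ _ hGk hEpos
      have h2 : μ0 Ω / μ0 {x ∈ Ω | ψ (f x) = 0} ≤ 2 :=
        ENNReal.div_le_of_le_mul hm2
      have h3 : ∫⁻ x in Ω, ENNReal.ofReal (‖ψ' (f x) • v x‖ * w x) ≤ I := by
        refine lintegral_mono_ae ?_
        filter_upwards [hwpos] with x hx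
        refine ENNReal.ofReal_le_ofReal (mul_le_mul_of_nonneg_right ?_ hx.le)
        rw [norm_smul]
        exact mul_le_of_le_one_left (norm_nonneg _) (hbd _)
      have h4 : ∫⁻ x in Ω, ENNReal.ofReal |ψ (f x)| ∂μ0 ≤ ENNReal.ofReal C * 3 * I := by
        refine h1.trans ?_
        have : (3 : ℝ≥0∞) = 1 + 2 := by norm_num
        rw [this]
        gcongr
      rw [hres] at h4
      calc ∫⁻ x, ENNReal.ofReal (max (σ * (f x - c)) 0) ∂μ0
          ≤ ∫⁻ x, (ENNReal.ofReal |ψ (f x)| + ENNReal.ofReal s) ∂μ0 := by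
            refine lintegral_mono fun x => ?_
            rw [← ENNReal.ofReal_add (abs_nonneg _) hs.le]
            refine ENNReal.ofReal_le_ofReal ?_
            have h5 := psiPlus_ge s (σ * (f x - c))
            have h6 := le_abs_self (ψ (f x))
            simp only [hψ] at h6 ⊢
            linarith
        _ = ∫⁻ x, ENNReal.ofReal |ψ (f x)| ∂μ0 + ENNReal.ofReal s * μ0 Ω := by
            rw [lintegral_add_right _ measurable_const, lintegral_const, huniv]
        _ ≤ _ := by gcongr
    have ht : Tendsto (fun k : ℕ => ENNReal.ofReal C * 3 * I +
        ENNReal.ofReal (1 / ((k : ℝ) + 1)) * μ0 Ω) atTop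
        (𝓝 (ENNReal.ofReal C * 3 * I + ENNReal.ofReal 0 * μ0 Ω)) := by
      refine Tendsto.add tendsto_const_nhds (ENNReal.Tendsto.mul_const ?_ (Or.inr (measure_ne_top _ _)))
      exact ENNReal.tendsto_ofReal tendsto_one_div_add_atTop_nhds_zero_nat
    rw [ENNReal.ofReal_zero, zero_mul, add_zero] at ht
    exact ge_of_tendsto' ht fun k => step _ (by positivity)
  have p1 := half 1 (by simp) (by simpa using hc1)
  have p2 := half (-1) (by simp) (by simpa using hc2)
  have habs : ∫⁻ x, ENNReal.ofReal |f x - c| ∂μ0 ≤ ENNReal.ofReal (6 * C * ∫ x in Ω, ‖v x‖ * w x) := by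
    calc ∫⁻ x, ENNReal.ofReal |f x - c| ∂μ0
        ≤ ∫⁻ x, (ENNReal.ofReal (max (1 * (f x - c)) 0) +
            ENNReal.ofReal (max (-1 * (f x - c)) 0)) ∂μ0 := by
          refine lintegral_mono fun x => ?_
          rw [← ENNReal.ofReal_add (le_max_right _ _) (le_max_right _ _)]
          refine ENNReal.ofReal_le_ofReal (abs_le'.2 ⟨?_, ?_⟩)
          · have := le_max_left (1 * (f x - c)) 0
            have := le_max_right (-1 * (f x - c)) 0
            linarith
          · have := le_max_right (1 * (f x - c)) 0
            have := le_max_left (-1 * (f x - c)) 0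
            linarith
      _ = ∫⁻ x, ENNReal.ofReal (max (1 * (f x - c)) 0) ∂μ0 +
            ∫⁻ x, ENNReal.ofReal (max (-1 * (f x - c)) 0) ∂μ0 := by
          refine lintegral_add_left' ?_ _
          have : Continuous fun t : ℝ => max (1 * (t - c)) 0 := by fun_prop
          exact (this.comp_aestronglyMeasurable hfi.aestronglyMeasurable).aemeasurable.ennreal_ofReal
      _ ≤ ENNReal.ofReal C * 3 * I + ENNReal.ofReal C * 3 * I := by gcongr
      _ = ENNReal.ofReal (6 * C * ∫ x in Ω, ‖v x‖ * w x) := by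
          rw [ENNReal.ofReal_mul (by positivity), ENNReal.ofReal_mul (by positivity), hIJ]
          have : ENNReal.ofReal 6 = 6 := by simp
          rw [this]; ring
  have hJ : 0 ≤ ∫ x in Ω, ‖v x‖ * w x := integral_nonneg_of_ae hvwnn
  have hfc : Integrable (fun x => f x - c) μ0 := hfi.sub (integrable_const c)
  have habs2 : ∫ x, |f x - c| ∂μ0 ≤ 6 * C * ∫ x in Ω, ‖v x‖ * w x := by
    rw [← ofReal_integral_eq_lintegral_ofReal hfc.abs (Eventually.of_forall fun x => abs_nonneg _)] at habs
    exact (ENNReal.ofReal_le_ofReal_iff (by positivity)).1 habs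
  rw [hres]
  set M := (μ0 Ω).toReal with hM
  have hMpos : 0 < M := ENNReal.toReal_pos hΩpos (measure_ne_top _ _)
  set a := (∫ y, f y ∂μ0) / M with ha
  have hMr : μ0.real univ = M := by rw [Measure.real, huniv]
  have h7 : |c - a| * M ≤ ∫ x, |f x - c| ∂μ0 := by
    have e : (a - c) * M = ∫ x, (f x - c) ∂μ0 := by
      rw [integral_sub hfi (integrable_const c), integral_const, hMr, ha, smul_eq_mul]
      field_simp
    rw [abs_sub_comm, ← abs_of_pos hMpos, ← abs_mul, e]
    exact abs_integral_le_integral_abs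
  calc ∫ x, |f x - a| ∂μ0 ≤ ∫ x, (|f x - c| + |c - a|) ∂μ0 := by
        refine integral_mono (hfi.sub (integrable_const a)).abs
          (hfc.abs.add (integrable_const _)) fun x => abs_sub_le _ _ _
    _ = ∫ x, |f x - c| ∂μ0 + |c - a| * M := by
        rw [integral_add hfc.abs (integrable_const _), integral_const, hMr, smul_eq_mul, mul_comm M]
    _ ≤ 12 * C * ∫ x in Ω, ‖v x‖ * w x := by linarith

end cases_
open Filter Topology in
lemma singular_star {n : ℕ} {Ω U : Set (En n)} {μ0 : Measure (En n)} {w : En n → ℝ}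
    [IsFiniteMeasure μ0] (hres : μ0.restrict Ω = μ0) (hac : ¬ μ0 ≪ volume)
    (hP : P1 Ω U μ0 w) : P1star Ω U μ0 w := by
  obtain ⟨C, hC, hP⟩ := hP
  -- zero-one law on Lebesgue-null sets
  have zo : ∀ A : Set (En n), MeasurableSet A → volume A = 0 → μ0 A = 0 ∨ μ0 Aᶜ = 0 := by
    intro A hA hA0
    set f : En n → ℝ := A.indicator 1 with hf
    have hf0 : f =ᵐ[volume] 0 := by
      have : ∀ᵐ x ∂(volume : Measure (En n)), x ∉ A := measure_eq_zero_iff_ae_notMem.1 hA0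
      filter_upwards [this] with x hx
      simp [hf, hx]
    have hG : MemG U f (fun _ => 0) := by
      refine ⟨?_, ?_, ?_⟩
      · have : LocallyIntegrable f volume :=
          ((integrable_zero _ _ _).congr hf0.symm).locallyIntegrable
        exact this.locallyIntegrableOn U
      · intro φ _ _ _
        have : ∫ x in U, f x • gradient φ x = ∫ x in U, (0 : En n) := by
          refine integral_congr_ae (ae_restrict_of_ae ?_)
          filter_upwards [hf0] with x hx
          simp [hx]
        rw [this]; simp
      · intro δ _
        exact ⟨n + 1, by linarith, MemLp.zero⟩
    have hfi : Integrable f μ0 := (integrable_const (1 : ℝ)).indicator hA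
    have h1 := hP f _ ⟨hG, hfi, by simp⟩
    set a := (∫ y in Ω, f y ∂μ0) / (μ0 Ω).toReal with ha
    rw [hres] at h1
    simp only [norm_zero, zero_mul, integral_zero, mul_zero] at h1
    have hi2 : Integrable (fun x => |f x - a|) μ0 := (hfi.sub (integrable_const a)).abs
    have h2 : ∫ x, |f x - a| ∂μ0 = 0 :=
      le_antisymm h1 (integral_nonneg fun x => abs_nonneg _)
    rw [integral_eq_zero_iff_of_nonneg (fun x => abs_nonneg _) hi2] at h2
    have h3 : ∀ᵐ x ∂μ0, f x = a := by
      filter_upwards [h2] with x hx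
      have : |f x - a| = 0 := hx
      rw [abs_eq_zero] at this; linarith
    by_cases ha0 : a = 0
    · left
      rw [measure_eq_zero_iff_ae_notMem]
      filter_upwards [h3] with x hx hxA
      rw [ha0, hf, indicator_of_mem hxA] at hx
      simp at hx
    · right
      rw [measure_eq_zero_iff_ae_notMem]
      filter_upwards [h3] with x hx hxA
      rw [hf, indicator_of_notMem hxA] at hx
      exact ha0 hx.symm
  obtain ⟨N, hN, hN0, hNpos⟩ : ∃ N, MeasurableSet N ∧ volume N = 0 ∧ μ0 N ≠ 0 := by
    by_contra h
    push Not at h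
    exact hac (Measure.AbsolutelyContinuous.mk h)
  have hNc : μ0 Nᶜ = 0 := (zo N hN hN0).resolve_left hNpos
  obtain ⟨p, hp⟩ : ∃ p, (id : En n → En n) =ᵐ[μ0] Function.const _ p := by
    refine exists_eventuallyEq_const_of_forall_separating MeasurableSet fun B hB => ?_
    rcases zo (B ∩ N) (hB.inter hN) (measure_mono_null inter_subset_right hN0) with h | h
    · right
      filter_upwards [measure_eq_zero_iff_ae_notMem.1 h, measure_eq_zero_iff_ae_notMem.1 hNc]
        with x hx hx2 hxB
      exact hx ⟨hxB, not_not.1 hx2⟩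
    · left
      filter_upwards [measure_eq_zero_iff_ae_notMem.1 h] with x hx
      exact (not_not.1 hx).1
  refine ⟨1, one_pos, fun f v _ hE => ?_⟩
  have hfp : f p = 0 := by
    by_contra h
    refine hE.ne' (measure_eq_zero_iff_ae_notMem.2 ?_)
    filter_upwards [hp] with x hx hxE
    have : x = p := hx
    rw [this] at hxE
    exact h hxE.2
  have : ∫⁻ x in Ω, ENNReal.ofReal |f x| ∂μ0 = 0 := by
    rw [hres]
    have h0 : (fun x => ENNReal.ofReal |f x|) =ᵐ[μ0] fun _ => 0 := by
      filter_upwards [hp] with x hx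
      have : x = p := hx
      simp [this, hfp]
    rw [lintegral_congr_ae h0]; simp
  rw [this]; exact zero_le

/-- (Proposition 4.1 (1).) For a bounded domain `Ω ⊆ ℝⁿ`, a nontrivial
finite positive Radon measure `μ0` on `Ω` and a weight `w ∈ L¹(Ω)`, `w > 0` a.e.,
the Poincaré inequalities `(P1)` and `(P1*)` are equivalent. -/
theorem stmt_10 (n : ℕ) (hn : 1 ≤ n) (Ω Ot : Set (En n))
    (hΩopen : IsOpen Ω) (hΩconn : IsConnected Ω) (hΩbdd : Bornology.IsBounded Ω)
    (hcov : Ω ⊆ Ot) (hcovnull : volume (Ot \ Ω) = 0)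
    (μ0 : Measure (En n)) [IsFiniteMeasure μ0] (hμ0ne : μ0 ≠ 0) (hμ0supp : μ0 Ωᶜ = 0)
    (w : En n → ℝ) (hwint : IntegrableOn w Ω volume)
    (hwpos : ∀ᵐ x ∂volume.restrict Ω, 0 < w x) :
    P1 Ω (hatSet Ot) μ0 w ↔ P1star Ω (hatSet Ot) μ0 w := by
  obtain ⟨hU, hΩU, hne⟩ := hat_facts hn Ω Ot hΩopen hΩbdd hcov hcovnull
  have hΩm : MeasurableSet Ω := hΩopen.measurableSet
  have hres : μ0.restrict Ω = μ0 := Measure.restrict_eq_self_of_ae_mem (by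
    rw [ae_iff]; exact hμ0supp)
  refine ⟨fun hP => ?_, star_to_P1 hn hU hne hΩm hΩU hμ0ne hres hwint hwpos⟩
  by_cases hac : μ0 ≪ volume
  · exact P1_to_star hn hU hne hΩm hΩU hres hac hwint hwpos hP
  · exact singular_star hres hac hP
end
end
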